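/- arXiv:1909.09642 — 2 statements merged into one kernel-verified Lean document; each statement's English description precedes it below -/
import Mathlib

section
/- Let q = p^f for a prime p and positive integer f. If q - 1 = 2^a for a positive integer a and q + 1 = 2^b * 5^c for nonnegative integers b, c, then q = 3 or q = 9. -/
theorem stmt_1 (p f a b c q : ℕ) (hp : p.Prime) (hf : 1 ≤ f) (hq : q = p ^ f)
    (ha : 1 ≤ a) (h1 : q - 1 = 2 ^ a) (h2 : q + 1 = 2 ^ b * 5 ^ c) :
    q = 3 ∨ q = 9 := by
  have hpos : 0 < 2 ^ a := by positivity
  have hodd : 5 ^ c % 2 = 1 := by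
    simp [Nat.pow_mod]
  obtain ⟨m, rfl⟩ : ∃ m, a = m + 1 := ⟨a - 1, by omega⟩
  rcases m with _ | m
  · left
    norm_num at h1
    omega
  right
  have e1 : 2 ^ (m + 1 + 1) = 4 * 2 ^ m := by ring
  rw [e1] at h1 hpos
  have hb : b = 1 := by
    rcases b with _ | _ | b
    · simp at h2
      omega
    · rfl
    · exfalso
      have e2 : 2 ^ (b + 1 + 1) * 5 ^ c = 4 * (2 ^ b * 5 ^ c) := by ring
      rw [e2] at h2
      omega
  subst hb
  have h5 : 2 * 2 ^ m + 1 = 5 ^ c := by omega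
  rcases Nat.even_or_odd' c with ⟨k, rfl | rfl⟩
  · exfalso
    have h3 : 5 ^ (2 * k) % 3 = 1 := by
      rw [pow_mul]; simp [Nat.pow_mod]
    have hd : 3 ∣ 2 ^ m := by omega
    have := Nat.prime_three.dvd_of_dvd_pow hd
    omega
  · have h8 : 5 ^ (2 * k + 1) % 8 = 5 := by
      rw [pow_succ, pow_mul]; simp [Nat.mul_mod, Nat.pow_mod]
    rcases m with _ | _ | m
    · simp at h5
      omega
    · norm_num at h1
      omega
    · have e3 : 2 ^ (m + 1 + 1) = 4 * 2 ^ m := by ring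
      omega
end

section
/- If f and a are positive integers with 2^a - 1 = 3^f, then f = 1 (so the only solution is 2^2 - 1 = 3). -/
theorem stmt_6 (f a : ℕ) (hf : 1 ≤ f) (ha : 1 ≤ a) (h : 2 ^ a - 1 = 3 ^ f) :
    f = 1 := by
  have key : ∀ n : ℕ, 3 ^ n % 8 = 1 ∨ 3 ^ n % 8 = 3 := by
    intro n
    induction n with
    | zero => left; norm_num
    | succ k ih => rw [pow_succ]; omega
  have h8 := key f
  have ha3 : a < 3 := by
    by_contra hc
    obtain ⟨k, rfl⟩ : ∃ k, a = 3 + k := ⟨a - 3, by omega⟩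
    have hk : 0 < 2 ^ k := by positivity
    rw [pow_add] at h
    omega
  obtain ⟨m, rfl⟩ : ∃ m, f = m + 1 := ⟨f - 1, by omega⟩
  have hm : m < 3 ^ m := Nat.lt_pow_self (by norm_num)
  rw [pow_succ] at h
  interval_cases a <;> omega
end
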